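/- arXiv:2604.01320 — 7 statements merged into one kernel-verified Lean document; each statement's English description precedes it below -/
import Mathlib

section
/- Let β > 0, let Δ ∈ (0, 1/2), let n be a nonnegative integer and set ω_n = (2π/β)(n + 1/2). Then the integral ∫₀^β (π / (β sin(πτ/β)))^{2Δ} e^{i ω_n τ} dτ converges and equals i π (sin(πΔ))^{-1} (2π/β)^{2Δ-1} · Γ(Δ + βω_n/(2π)) / (Γ(2Δ) · Γ(1 - Δ + βω_n/(2π))), where Γ is the complex Gamma function. -/
open Real MeasureTheory

/-!
Rescaling `θ = πτ/β` turns the integral into Cauchy's integral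
`J(s, a) = ∫₀^π (sin θ)^(s-1) e^{iaθ} dθ` at `s = 1 - 2Δ` and the odd integer `a = 2n + 1`.
Integrating the derivative of `(sin θ)^s e^{iaθ}`, which vanishes at both endpoints, gives
`(s + a) J(s, a + 1) = (a - s) J(s, a - 1)`. The recurrence determines `J(s, m)` for `m ∈ ℕ` from
`J(s, 0)`, a Beta integral through `t = (1 - cos θ)/2`, and `J(s, 1) = i J(s + 1, 0)`; negative `m`
follow by `θ ↦ π - θ`. The outcome
`J(s, m) = π i^m 2^(1-s) Γ(s) / (Γ((s+1+m)/2) Γ((s+1-m)/2))`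
becomes the stated quotient by the reflection formula at `2Δ` and at `Δ + n + 1/2`.
-/

theorem ofReal_inv_cpow {x : ℝ} (hx : 0 ≤ x) (s : ℂ) : ((x⁻¹ : ℝ) : ℂ) ^ s = (x : ℂ) ^ (-s) := by
  have harg : (x : ℂ).arg ≠ π := by
    rw [Complex.arg_ofReal_of_nonneg hx]
    exact pi_ne_zero.symm
  rw [Complex.ofReal_inv, Complex.inv_cpow _ _ harg, Complex.cpow_neg]

theorem cpow_sub_one_mul_self (x : ℂ) {s : ℂ} (hs : s ≠ 0) : x ^ (s - 1) * x = x ^ s := by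
  rcases eq_or_ne x 0 with rfl | hx
  · rw [mul_zero, Complex.zero_cpow hs]
  · rw [Complex.cpow_sub _ _ hx, Complex.cpow_one, div_mul_cancel₀ _ hx]

theorem bijOn_one_sub_cos_div_two :
    Set.BijOn (fun θ : ℝ => (1 - cos θ) / 2) (Set.Ioo 0 π) (Set.Ioo 0 1) := by
  refine Set.InvOn.bijOn (f' := fun t => arccos (1 - 2 * t)) ⟨?leftInv, ?rightInv⟩ ?mapsTo ?mapsTo'
  case leftInv =>
    intro θ hθ
    simp only [mul_div_cancel₀ _ (two_ne_zero' ℝ), sub_sub_cancel, arccos_cos hθ.1.le hθ.2.le]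
  case rightInv =>
    intro t ht
    simp only [cos_arccos (x := 1 - 2 * t) (by linarith [ht.2]) (by linarith [ht.1])]
    ring
  case mapsTo =>
    intro θ hθ
    have hcos := mapsTo_cos_Ioo hθ
    constructor <;> linarith [hcos.1, hcos.2]
  case mapsTo' =>
    intro t ht
    exact ⟨arccos_pos.2 (by linarith [ht.1]), arccos_lt_pi.2 (by linarith [ht.2])⟩

theorem hasDerivAt_one_sub_cos_div_two (θ : ℝ) :
    HasDerivAt (fun θ : ℝ => (1 - cos θ) / 2) (sin θ / 2) θ := by
  simpa using ((hasDerivAt_cos θ).const_sub 1).div_const 2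

theorem abs_sin_div_two_smul_betaIntegrand (s : ℂ) {θ : ℝ} (hθ : θ ∈ Set.Ioo 0 π) :
    |sin θ / 2| • ((((1 - cos θ) / 2 : ℝ) : ℂ) ^ (s / 2 - 1) *
        (1 - (((1 - cos θ) / 2 : ℝ) : ℂ)) ^ (s / 2 - 1)) =
      2 ^ (1 - s) * (sin θ : ℂ) ^ (s - 1) := by
  obtain ⟨ht0, ht1⟩ := bijOn_one_sub_cos_div_two.mapsTo hθ
  have hsin : 0 < sin θ := sin_pos_of_mem_Ioo hθ
  have hhalf : ((sin θ / 2 : ℝ) : ℂ) ≠ 0 := by exact_mod_cast (half_pos hsin).ne'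
  have hprod : (1 - cos θ) / 2 * (1 - (1 - cos θ) / 2) = sin θ / 2 * (sin θ / 2) := by
    linear_combination (-1 / 4 : ℝ) * sin_sq_add_cos_sq θ
  calc |sin θ / 2| • ((((1 - cos θ) / 2 : ℝ) : ℂ) ^ (s / 2 - 1) *
          (1 - (((1 - cos θ) / 2 : ℝ) : ℂ)) ^ (s / 2 - 1))
      = ((sin θ / 2 : ℝ) : ℂ) * (((sin θ / 2 : ℝ) : ℂ) ^ (s / 2 - 1) *
          ((sin θ / 2 : ℝ) : ℂ) ^ (s / 2 - 1)) := by
        rw [abs_of_pos (half_pos hsin), Complex.real_smul, ← Complex.ofReal_one,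
          ← Complex.ofReal_sub, ← Complex.mul_cpow_ofReal_nonneg ht0.le (sub_nonneg.2 ht1.le),
          ← Complex.mul_cpow_ofReal_nonneg (half_pos hsin).le (half_pos hsin).le,
          ← Complex.ofReal_mul, ← Complex.ofReal_mul, hprod]
    _ = ((sin θ / 2 : ℝ) : ℂ) ^ (s - 1) := by
        nth_rw 1 [← Complex.cpow_one ((sin θ / 2 : ℝ) : ℂ)]
        rw [← Complex.cpow_add _ _ hhalf, ← Complex.cpow_add _ _ hhalf]
        ring_nf
    _ = 2 ^ (1 - s) * (sin θ : ℂ) ^ (s - 1) := by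
        rw [div_eq_inv_mul, Complex.ofReal_mul,
          Complex.mul_cpow_ofReal_nonneg (by positivity) hsin.le, ofReal_inv_cpow zero_le_two,
          neg_sub, Complex.ofReal_ofNat]

theorem intervalIntegrable_sin_cpow {s : ℂ} (hs : 0 < s.re) :
    IntervalIntegrable (fun θ : ℝ => (sin θ : ℂ) ^ (s - 1)) volume 0 π := by
  have hs2 : 0 < (s / 2).re := by simpa using hs
  have hbeta := Complex.betaIntegral_convergent hs2 hs2
  rw [intervalIntegrable_iff_integrableOn_Ioo_of_le zero_le_one,
    ← bijOn_one_sub_cos_div_two.image_eq,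
    integrableOn_image_iff_integrableOn_abs_deriv_smul measurableSet_Ioo
      (fun θ _ => (hasDerivAt_one_sub_cos_div_two θ).hasDerivWithinAt)
      bijOn_one_sub_cos_div_two.injOn,
    integrableOn_congr_fun (fun _ => abs_sin_div_two_smul_betaIntegrand s) measurableSet_Ioo,
    IntegrableOn, integrable_const_mul_iff (by simp [Complex.cpow_eq_zero_iff])] at hbeta
  rwa [intervalIntegrable_iff_integrableOn_Ioo_of_le pi_pos.le]

theorem two_cpow_mul_integral_sin_cpow (s : ℂ) :
    2 ^ (1 - s) * ∫ θ in (0 : ℝ)..π, (sin θ : ℂ) ^ (s - 1) =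
      Complex.betaIntegral (s / 2) (s / 2) := by
  rw [Complex.betaIntegral, intervalIntegral.integral_of_le zero_le_one,
    integral_Ioc_eq_integral_Ioo, ← bijOn_one_sub_cos_div_two.image_eq,
    integral_image_eq_integral_abs_deriv_smul measurableSet_Ioo
      (fun θ _ => (hasDerivAt_one_sub_cos_div_two θ).hasDerivWithinAt)
      bijOn_one_sub_cos_div_two.injOn,
    setIntegral_congr_fun measurableSet_Ioo (fun _ => abs_sin_div_two_smul_betaIntegrand s),
    integral_const_mul, intervalIntegral.integral_of_le pi_pos.le, integral_Ioc_eq_integral_Ioo]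

theorem Gamma_half_mul_Gamma_add_one_half (s : ℂ) :
    Complex.Gamma (s / 2) * Complex.Gamma ((s + 1) / 2) =
      Complex.Gamma s * 2 ^ (1 - s) * √π := by
  simpa only [add_div, mul_div_cancel₀ s (two_ne_zero' ℂ)] using
    Complex.Gamma_mul_Gamma_add_half (s / 2)

theorem Gamma_add_one_div_two_ne_zero {s : ℂ} (hs : 0 < s.re) :
    Complex.Gamma ((s + 1) / 2) ≠ 0 := by
  apply Complex.Gamma_ne_zero_of_re_pos
  rw [Complex.div_ofNat_re, Complex.add_re, Complex.one_re]
  positivity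

theorem integral_sin_cpow {s : ℂ} (hs : 0 < s.re) :
    ∫ θ in (0 : ℝ)..π, (sin θ : ℂ) ^ (s - 1) =
      √π * Complex.Gamma (s / 2) / Complex.Gamma ((s + 1) / 2) := by
  have hs2 : 0 < (s / 2).re := by simpa using hs
  have hΓ : Complex.Gamma s ≠ 0 := Complex.Gamma_ne_zero_of_re_pos hs
  have hΓ' : Complex.Gamma ((s + 1) / 2) ≠ 0 := Gamma_add_one_div_two_ne_zero hs
  have hpow : (2 : ℂ) ^ (1 - s) ≠ 0 := by simp [Complex.cpow_eq_zero_iff]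
  have hbeta := two_cpow_mul_integral_sin_cpow s
  rw [Complex.betaIntegral_eq_Gamma_mul_div _ _ hs2 hs2, add_halves, eq_div_iff hΓ] at hbeta
  rw [eq_div_iff hΓ']
  apply mul_left_cancel₀ (mul_ne_zero hΓ hpow)
  linear_combination Complex.Gamma ((s + 1) / 2) * hbeta +
    Complex.Gamma (s / 2) * Gamma_half_mul_Gamma_add_one_half s

/-- The integrand of Cauchy's integral `∫₀^π (sin θ)^(s-1) e^{iaθ} dθ`. As for the Beta function,
the exponent is shifted by one, so that the integral converges for `0 < re s`. -/
noncomputable def sinCpowExp (s a : ℂ) (θ : ℝ) : ℂ :=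
  (sin θ : ℂ) ^ (s - 1) * Complex.exp (Complex.I * a * θ)

theorem intervalIntegrable_sinCpowExp {s : ℂ} (hs : 0 < s.re) (a : ℂ) :
    IntervalIntegrable (sinCpowExp s a) volume 0 π :=
  (intervalIntegrable_sin_cpow hs).mul_continuousOn (by fun_prop)

theorem integral_sinCpowExp_neg (s a : ℂ) :
    ∫ θ in (0 : ℝ)..π, sinCpowExp s (-a) θ =
      Complex.exp (-(Complex.I * a * π)) * ∫ θ in (0 : ℝ)..π, sinCpowExp s a θ := by
  have hreflect (θ : ℝ) :
      sinCpowExp s (-a) (π - θ) = Complex.exp (-(Complex.I * a * π)) * sinCpowExp s a θ := by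
    rw [sinCpowExp, sinCpowExp, sin_pi_sub, mul_left_comm, ← Complex.exp_add]
    push_cast
    ring_nf
  rw [← intervalIntegral.integral_const_mul]
  simpa [hreflect] using
    (intervalIntegral.integral_comp_sub_left (sinCpowExp s (-a)) (a := 0) (b := π) π).symm

theorem sinCpowExp_add_one (s a : ℂ) (θ : ℝ) :
    sinCpowExp s (a + 1) θ = sinCpowExp s a θ * ((cos θ : ℂ) + sin θ * Complex.I) := by
  rw [sinCpowExp, sinCpowExp, Complex.ofReal_cos, Complex.ofReal_sin, ← Complex.exp_mul_I,
    mul_assoc (_ ^ _), ← Complex.exp_add]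
  ring_nf

theorem sinCpowExp_sub_one (s a : ℂ) (θ : ℝ) :
    sinCpowExp s (a - 1) θ = sinCpowExp s a θ * ((cos θ : ℂ) - sin θ * Complex.I) := by
  have hexp : Complex.cos θ - Complex.sin θ * Complex.I = Complex.exp (-θ * Complex.I) := by
    rw [Complex.exp_mul_I, Complex.cos_neg, Complex.sin_neg, neg_mul, sub_eq_add_neg]
  rw [sinCpowExp, sinCpowExp, Complex.ofReal_cos, Complex.ofReal_sin, hexp, mul_assoc (_ ^ _),
    ← Complex.exp_add]
  ring_nf

theorem hasDerivAt_sin_cpow_mul_exp {s : ℂ} (hs : s ≠ 0) (a : ℂ) {θ : ℝ} (hθ : sin θ ≠ 0) :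
    HasDerivAt (fun x : ℝ => (sin x : ℂ) ^ s * Complex.exp (Complex.I * a * x))
      ((s + a) / 2 * sinCpowExp s (a + 1) θ + (s - a) / 2 * sinCpowExp s (a - 1) θ) θ := by
  have hpow : HasDerivAt (fun x : ℝ => (sin x : ℂ) ^ s)
      (cos θ • (s * (sin θ : ℂ) ^ (s - 1))) θ :=
    (hasDerivAt_ofReal_cpow_const hθ hs).scomp θ (hasDerivAt_sin θ)
  have hexp : HasDerivAt (fun x : ℝ => Complex.exp (Complex.I * a * x))
      (Complex.exp (Complex.I * a * θ) * (Complex.I * a)) θ := by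
    simpa using ((Complex.ofRealCLM.hasDerivAt (x := θ)).const_mul (Complex.I * a)).cexp
  refine (hpow.mul hexp).congr_deriv ?_
  rw [sinCpowExp_add_one, sinCpowExp_sub_one, sinCpowExp, ← cpow_sub_one_mul_self _ hs,
    Complex.real_smul]
  ring

theorem integral_sinCpowExp_add_one {s : ℂ} (hs : 0 < s.re) (a : ℂ) :
    (s + a) * ∫ θ in (0 : ℝ)..π, sinCpowExp s (a + 1) θ =
      (a - s) * ∫ θ in (0 : ℝ)..π, sinCpowExp s (a - 1) θ := by
  have hs0 := Complex.ne_zero_of_re_pos hs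
  have hplus := (intervalIntegrable_sinCpowExp hs (a + 1)).const_mul ((s + a) / 2)
  have hminus := (intervalIntegrable_sinCpowExp hs (a - 1)).const_mul ((s - a) / 2)
  have hcont : Continuous fun x : ℝ => (sin x : ℂ) ^ s * Complex.exp (Complex.I * a * x) :=
    ((Complex.continuous_ofReal_cpow_const hs).comp continuous_sin).mul (by fun_prop)
  have hftc := intervalIntegral.integral_eq_sub_of_hasDerivAt_of_le pi_pos.le hcont.continuousOn
    (fun θ hθ => hasDerivAt_sin_cpow_mul_exp hs0 a (sin_pos_of_mem_Ioo hθ).ne')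
    (hplus.add hminus)
  rw [intervalIntegral.integral_add hplus hminus, intervalIntegral.integral_const_mul,
    intervalIntegral.integral_const_mul] at hftc
  simp only [sin_pi, sin_zero, Complex.ofReal_zero, Complex.zero_cpow hs0, zero_mul,
    sub_zero] at hftc
  linear_combination 2 * hftc

theorem integral_sinCpowExp_zero {s : ℂ} (hs : 0 < s.re) :
    ∫ θ in (0 : ℝ)..π, sinCpowExp s 0 θ =
      √π * Complex.Gamma (s / 2) / Complex.Gamma ((s + 1) / 2) := by
  simpa [sinCpowExp] using integral_sin_cpow hs

theorem integral_sinCpowExp_one {s : ℂ} (hs : 0 < s.re) :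
    ∫ θ in (0 : ℝ)..π, sinCpowExp s 1 θ =
      Complex.I * ∫ θ in (0 : ℝ)..π, sinCpowExp (s + 1) 0 θ := by
  have hs0 := Complex.ne_zero_of_re_pos hs
  have hdiff (θ : ℝ) : sinCpowExp s 1 θ - sinCpowExp s (-1) θ =
      2 * Complex.I * sinCpowExp (s + 1) 0 θ := by
    have hplus := sinCpowExp_add_one s 0 θ
    have hminus := sinCpowExp_sub_one s 0 θ
    rw [zero_add] at hplus
    rw [zero_sub] at hminus
    rw [hplus, hminus, sinCpowExp, sinCpowExp, add_sub_cancel_right,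
      ← cpow_sub_one_mul_self _ hs0]
    ring
  have hsub := intervalIntegral.integral_sub
    (intervalIntegrable_sinCpowExp hs 1) (intervalIntegrable_sinCpowExp hs (-1))
  have hreflect := integral_sinCpowExp_neg s 1
  rw [mul_one, mul_comm Complex.I, Complex.exp_neg, Complex.exp_pi_mul_I] at hreflect
  simp only [hdiff, intervalIntegral.integral_const_mul, hreflect] at hsub
  linear_combination -hsub / 2

-- Stated with inverses because `1 / Γ` is entire: it vanishes at the poles of `Γ`, as does
-- `(Complex.Gamma z)⁻¹` through the junk value `Complex.Gamma z = 0`.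
theorem integral_sinCpowExp_natCast {s : ℂ} (hs : 0 < s.re) (m : ℕ) :
    ∫ θ in (0 : ℝ)..π, sinCpowExp s m θ =
      π * Complex.I ^ m * 2 ^ (1 - s) * Complex.Gamma s *
        ((Complex.Gamma ((s + 1 + m) / 2))⁻¹ * (Complex.Gamma ((s + 1 - m) / 2))⁻¹) := by
  have hsqrt : (√π : ℂ) * √π = π := by exact_mod_cast mul_self_sqrt pi_pos.le
  have hdup : √π * Complex.Gamma (s / 2) * Complex.Gamma ((s + 1) / 2) =
      π * 2 ^ (1 - s) * Complex.Gamma s := by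
    linear_combination √π * Gamma_half_mul_Gamma_add_one_half s +
      Complex.Gamma s * 2 ^ (1 - s) * hsqrt
  induction m using Nat.twoStepInduction with
  | zero =>
    have hΓ := Gamma_add_one_div_two_ne_zero hs
    rw [Nat.cast_zero, integral_sinCpowExp_zero hs, add_zero, sub_zero, pow_zero, mul_one, ← hdup]
    field_simp
  | one =>
    have hΓ : Complex.Gamma (s / 2) ≠ 0 :=
      Complex.Gamma_ne_zero_of_re_pos (by simpa using hs)
    have hs' : 0 < (s + 1).re := by rw [Complex.add_re, Complex.one_re]; positivity
    rw [Nat.cast_one, integral_sinCpowExp_one hs, integral_sinCpowExp_zero hs',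
      add_sub_cancel_right, pow_one, mul_right_comm (π : ℂ), mul_right_comm _ Complex.I, ← hdup]
    field_simp
  | more m ih _ =>
    have hne : s + (m + 1) ≠ 0 := by
      apply Complex.ne_zero_of_re_pos
      rw [Complex.add_re, Complex.add_re, Complex.natCast_re, Complex.one_re]
      positivity
    have hrec := integral_sinCpowExp_add_one hs (m + 1)
    rw [add_sub_cancel_right, add_assoc (m : ℂ), one_add_one_eq_two, ih] at hrec
    have hup := Complex.one_div_Gamma_eq_self_mul_one_div_Gamma_add_one ((s + 1 + m) / 2)
    have hdown := Complex.one_div_Gamma_eq_self_mul_one_div_Gamma_add_one ((s + 1 - (m + 2)) / 2)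
    rw [show (s + 1 + m) / 2 + 1 = (s + 1 + (m + 2)) / 2 by ring] at hup
    rw [show (s + 1 - (m + 2)) / 2 + 1 = (s + 1 - m) / 2 by ring] at hdown
    apply mul_left_cancel₀ hne
    rw [Nat.cast_add, Nat.cast_ofNat, hrec, hup, hdown, pow_add, Complex.I_sq]
    ring

theorem integral_sinCpowExp_intCast {s : ℂ} (hs : 0 < s.re) (m : ℤ) :
    ∫ θ in (0 : ℝ)..π, sinCpowExp s m θ =
      π * Complex.I ^ m * 2 ^ (1 - s) * Complex.Gamma s *
        ((Complex.Gamma ((s + 1 + m) / 2))⁻¹ * (Complex.Gamma ((s + 1 - m) / 2))⁻¹) := by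
  obtain ⟨k, rfl | rfl⟩ := m.eq_nat_or_neg
  · exact_mod_cast integral_sinCpowExp_natCast hs k
  · have hphase : Complex.exp (-(Complex.I * k * π)) * Complex.I ^ k = Complex.I ^ (-k : ℤ) := by
      rw [show -(Complex.I * k * π) = k * -(π * Complex.I) by ring, Complex.exp_nat_mul,
        Complex.exp_neg, Complex.exp_pi_mul_I, ← mul_pow, zpow_neg, zpow_natCast, ← inv_pow,
        Complex.inv_I]
      norm_num
    push_cast
    rw [integral_sinCpowExp_neg, integral_sinCpowExp_natCast hs, ← hphase]
    ring_nf

theorem one_sub_two_mul_re_pos {z : ℂ} (hz : z.re < 1 / 2) : 0 < (1 - 2 * z).re := by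
  have hre : (1 - 2 * z).re = 1 - 2 * z.re := by simp
  linarith

theorem Gamma_two_mul_mul_Gamma_one_sub_two_mul (z : ℂ) :
    Complex.Gamma (2 * z) * Complex.Gamma (1 - 2 * z) =
      π / (2 * Complex.sin (π * z) * Complex.cos (π * z)) := by
  rw [Complex.Gamma_mul_Gamma_one_sub, mul_left_comm, Complex.sin_two_mul]

theorem Gamma_add_half_int_mul_Gamma_one_sub (z : ℂ) (n : ℤ) :
    Complex.Gamma (z + (n + 1 / 2)) * Complex.Gamma (1 - (z + (n + 1 / 2))) =
      π / ((-1) ^ n * Complex.cos (π * z)) := by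
  have hangle : π * (z + (n + 1 / 2)) = π * z + n * π + π / 2 := by ring
  rw [Complex.Gamma_mul_Gamma_one_sub, hangle, Complex.sin_add_pi_div_two,
    Complex.cos_antiperiodic.add_int_mul_eq, Int.cast_negOnePow]

theorem inv_Gamma_one_sub_add_half_int {z : ℂ} (hz : Complex.cos (π * z) ≠ 0) (n : ℤ) :
    (Complex.Gamma (1 - (z + (n + 1 / 2))))⁻¹ =
      (-1) ^ n * Complex.cos (π * z) * Complex.Gamma (z + (n + 1 / 2)) / π := by
  have hπ : (π : ℂ) ≠ 0 := by exact_mod_cast pi_ne_zero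
  have hsign : (-1 : ℂ) ^ n ≠ 0 := zpow_ne_zero _ (by norm_num)
  have hreflect := Gamma_add_half_int_mul_Gamma_one_sub z n
  have hΓ : Complex.Gamma (1 - (z + (n + 1 / 2))) ≠ 0 :=
    right_ne_zero_of_mul (hreflect.trans_ne (div_ne_zero hπ (mul_ne_zero hsign hz)))
  rw [eq_div_iff (mul_ne_zero hsign hz)] at hreflect
  rw [eq_div_iff hπ, inv_mul_eq_iff_eq_mul₀ hΓ]
  linear_combination -hreflect

theorem two_mul_sin_mul_cos_ne_zero {z : ℂ} (hz : z.re < 1 / 2) (hpole : ∀ k : ℕ, 2 * z ≠ -k) :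
    2 * Complex.sin (π * z) * Complex.cos (π * z) ≠ 0 := by
  have hΓ : Complex.Gamma (1 - 2 * z) ≠ 0 :=
    Complex.Gamma_ne_zero_of_re_pos (one_sub_two_mul_re_pos hz)
  intro hzero
  apply mul_ne_zero (Complex.Gamma_ne_zero hpole) hΓ
  rw [Gamma_two_mul_mul_Gamma_one_sub_two_mul, hzero, div_zero]

theorem integral_sinCpowExp_one_sub_two_mul_odd {Δ : ℂ} (hΔ : Δ.re < 1 / 2) (hΔ0 : Δ ≠ 0)
    (n : ℤ) :
    ∫ θ in (0 : ℝ)..π, sinCpowExp (1 - 2 * Δ) (2 * n + 1) θ =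
      π * ((-1) ^ n * Complex.I) * (2 * 2 ^ (2 * Δ - 1)) * Complex.Gamma (1 - 2 * Δ) *
        ((Complex.Gamma (1 - Δ + (n + 1 / 2)))⁻¹ *
          (Complex.Gamma (1 - (Δ + (n + 1 / 2))))⁻¹) := by
  have hphase : Complex.I ^ (2 * n + 1) = (-1) ^ n * Complex.I := by
    rw [zpow_add₀ Complex.I_ne_zero, zpow_mul, zpow_one, zpow_ofNat, Complex.I_sq]
  have hpow : (2 : ℂ) ^ (1 - (1 - 2 * Δ)) = 2 * 2 ^ (2 * Δ - 1) := by
    rw [sub_sub_cancel, mul_comm 2 (2 ^ _),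
      cpow_sub_one_mul_self 2 (mul_ne_zero two_ne_zero hΔ0)]
  have hintegral := integral_sinCpowExp_intCast (one_sub_two_mul_re_pos hΔ) (2 * n + 1)
  rw [hphase, hpow] at hintegral
  push_cast at hintegral
  rw [hintegral]
  ring_nf

theorem integral_sinCpowExp_odd {Δ : ℂ} (hΔ : Δ.re < 1 / 2) (hpole : ∀ k : ℕ, 2 * Δ ≠ -k)
    (n : ℤ) :
    ∫ θ in (0 : ℝ)..π, sinCpowExp (1 - 2 * Δ) (2 * n + 1) θ =
      Complex.I * π * (Complex.sin (π * Δ))⁻¹ * 2 ^ (2 * Δ - 1) *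
          Complex.Gamma (Δ + (n + 1 / 2)) /
        (Complex.Gamma (2 * Δ) * Complex.Gamma (1 - Δ + (n + 1 / 2))) := by
  have hΔ0 : Δ ≠ 0 := by simpa using hpole 0
  have hΓ : Complex.Gamma (2 * Δ) ≠ 0 := Complex.Gamma_ne_zero hpole
  have hsincos := two_mul_sin_mul_cos_ne_zero hΔ hpole
  have hsin : Complex.sin (π * Δ) ≠ 0 := right_ne_zero_of_mul (left_ne_zero_of_mul hsincos)
  have hcos : Complex.cos (π * Δ) ≠ 0 := right_ne_zero_of_mul hsincos
  have hπ : (π : ℂ) ≠ 0 := by exact_mod_cast pi_ne_zero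
  have hsign_sq : ((-1 : ℂ) ^ n) ^ 2 = 1 := by
    rw [← zpow_natCast, zpow_comm]
    norm_num
  have hΓ_one_sub : Complex.Gamma (1 - 2 * Δ) =
      π / (2 * Complex.sin (π * Δ) * Complex.cos (π * Δ)) / Complex.Gamma (2 * Δ) := by
    rw [eq_div_iff hΓ, mul_comm, Gamma_two_mul_mul_Gamma_one_sub_two_mul]
  rw [integral_sinCpowExp_one_sub_two_mul_odd hΔ hΔ0, hΓ_one_sub,
    inv_Gamma_one_sub_add_half_int hcos]
  generalize Complex.Gamma (Δ + (n + 1 / 2)) = X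
  generalize Complex.Gamma (1 - Δ + (n + 1 / 2)) = Y
  field_simp
  rw [hsign_sq, one_mul]

/-- The conformal two-point function `(π / (β sin(πτ/β)))^(2Δ)` at inverse temperature `β`, for
complex scaling dimension `Δ`. At `τ = 0` and `τ = β` the base is `0` because `π / 0 = 0`. -/
noncomputable def conformalTwoPoint (β : ℝ) (Δ : ℂ) (τ : ℝ) : ℂ :=
  ((π / (β * sin (π * τ / β)) : ℝ) : ℂ) ^ (2 * Δ)

theorem sin_pi_mul_div_nonneg {β τ : ℝ} (hβ : 0 < β) (hτ : τ ∈ Set.uIcc 0 β) :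
    0 ≤ sin (π * τ / β) := by
  rw [Set.uIcc_of_le hβ.le] at hτ
  obtain ⟨h0, h1⟩ := hτ
  apply sin_nonneg_of_nonneg_of_le_pi (by positivity)
  rw [div_le_iff₀ hβ]
  gcongr

theorem eqOn_conformalTwoPoint_ofReal_mul_exp {β : ℝ} (hβ : 0 < β) (Δ : ℝ) (ω : ℂ) :
    Set.EqOn (fun τ : ℝ => conformalTwoPoint β Δ τ * Complex.exp (Complex.I * ω * τ))
      (fun τ : ℝ => ((π / (β * sin (π * τ / β))) ^ (2 * Δ) : ℝ) • Complex.exp (Complex.I * ω * τ))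
      (Set.uIcc 0 β) := by
  intro τ hτ
  have hsin := sin_pi_mul_div_nonneg hβ hτ
  simp only [conformalTwoPoint, Complex.real_smul]
  rw [Complex.ofReal_cpow (by positivity), Complex.ofReal_mul 2, Complex.ofReal_ofNat]

theorem conformalTwoPoint_mul_exp {β τ : ℝ} (hβ : 0 < β) (hτ : τ ∈ Set.uIcc 0 β) (Δ ω : ℂ) :
    conformalTwoPoint β Δ τ * Complex.exp (Complex.I * ω * τ) =
      ((π / β : ℝ) : ℂ) ^ (2 * Δ) * sinCpowExp (1 - 2 * Δ) (β * ω / π) (π / β * τ) := by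
  have hsin := sin_pi_mul_div_nonneg hβ hτ
  have hpow : conformalTwoPoint β Δ τ =
      ((π / β : ℝ) : ℂ) ^ (2 * Δ) * (sin (π / β * τ) : ℂ) ^ (1 - 2 * Δ - 1) := by
    rw [conformalTwoPoint, ← div_div, div_eq_mul_inv (π / β), Complex.ofReal_mul,
      Complex.mul_cpow_ofReal_nonneg (by positivity) (inv_nonneg.2 hsin), ofReal_inv_cpow hsin,
      sub_sub_cancel_left, mul_div_right_comm]
  have hβ' : (β : ℂ) ≠ 0 := by exact_mod_cast hβ.ne'
  have hπ : (π : ℂ) ≠ 0 := by exact_mod_cast pi_ne_zero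
  have hphase : Complex.I * ω * τ = Complex.I * (β * ω / π) * (π / β * τ : ℝ) := by
    push_cast
    field_simp
  rw [hpow, hphase, sinCpowExp, mul_assoc]

theorem intervalIntegrable_conformalTwoPoint_mul_exp {β : ℝ} (hβ : 0 < β) {Δ : ℂ}
    (hΔ : Δ.re < 1 / 2) (ω : ℂ) :
    IntervalIntegrable
      (fun τ : ℝ => conformalTwoPoint β Δ τ * Complex.exp (Complex.I * ω * τ)) volume 0 β := by
  have hscaled := (intervalIntegrable_sinCpowExp (one_sub_two_mul_re_pos hΔ)
    (β * ω / π)).comp_mul_left (c := π / β)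
  rw [zero_div, div_div_cancel₀ pi_ne_zero] at hscaled
  exact (hscaled.const_mul _).congr_uIoo fun τ hτ =>
    (conformalTwoPoint_mul_exp hβ (Set.uIoo_subset_uIcc_self hτ) Δ ω).symm

theorem integral_conformalTwoPoint_mul_exp {β : ℝ} (hβ : 0 < β) (Δ ω : ℂ) :
    ∫ τ in (0 : ℝ)..β, conformalTwoPoint β Δ τ * Complex.exp (Complex.I * ω * τ) =
      ((π / β : ℝ) : ℂ) ^ (2 * Δ - 1) *
        ∫ θ in (0 : ℝ)..π, sinCpowExp (1 - 2 * Δ) (β * ω / π) θ := by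
  have hscale : π / β ≠ 0 := (div_pos pi_pos hβ).ne'
  have hscale' : ((π / β : ℝ) : ℂ) ≠ 0 := by exact_mod_cast hscale
  rw [intervalIntegral.integral_congr fun τ hτ => conformalTwoPoint_mul_exp hβ hτ Δ ω,
    intervalIntegral.integral_const_mul, intervalIntegral.integral_comp_mul_left _ hscale,
    mul_zero, div_mul_cancel₀ _ hβ.ne', Complex.real_smul, Complex.cpow_sub _ _ hscale',
    Complex.cpow_one, Complex.ofReal_inv, ← mul_assoc, ← div_eq_mul_inv]

theorem matsubara_conformal_fourier_general {β : ℝ} (hβ : 0 < β) {Δ : ℂ} (hΔ : Δ.re < 1 / 2)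
    (hpole : ∀ k : ℕ, 2 * Δ ≠ -k) (n : ℤ) {ω : ℝ} (hω : ω = (2 * π / β) * ((n : ℝ) + 1 / 2)) :
    IntervalIntegrable
        (fun τ : ℝ => conformalTwoPoint β Δ τ * Complex.exp (Complex.I * ω * τ)) volume 0 β ∧
      ∫ τ in (0 : ℝ)..β, conformalTwoPoint β Δ τ * Complex.exp (Complex.I * ω * τ) =
        Complex.I * π * (Complex.sin (π * Δ))⁻¹ * ((2 * π / β : ℝ) : ℂ) ^ (2 * Δ - 1) *
            Complex.Gamma (Δ + β * ω / (2 * π)) /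
          (Complex.Gamma (2 * Δ) * Complex.Gamma (1 - Δ + β * ω / (2 * π))) := by
  have hβ' : (β : ℂ) ≠ 0 := by exact_mod_cast hβ.ne'
  have hπ : (π : ℂ) ≠ 0 := by exact_mod_cast pi_ne_zero
  have hfreq : β * ω / π = (2 * n + 1 : ℂ) := by rw [hω]; push_cast; field_simp
  have hfreq' : β * ω / (2 * π) = (n + 1 / 2 : ℂ) := by rw [hω]; push_cast; field_simp
  have hscale : ((2 * π / β : ℝ) : ℂ) ^ (2 * Δ - 1) =
      2 ^ (2 * Δ - 1) * ((π / β : ℝ) : ℂ) ^ (2 * Δ - 1) := by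
    rw [mul_div_assoc, Complex.ofReal_mul,
      Complex.mul_cpow_ofReal_nonneg zero_le_two (div_pos pi_pos hβ).le, Complex.ofReal_ofNat]
  refine ⟨intervalIntegrable_conformalTwoPoint_mul_exp hβ hΔ ω, ?_⟩
  rw [integral_conformalTwoPoint_mul_exp hβ, hfreq, integral_sinCpowExp_odd hΔ hpole, hfreq',
    hscale]
  ring

/-- Fourier transform at fermionic Matsubara frequency `ω_n = (2π/β)(n + 1/2)` of the
finite-temperature conformal two-point function `(π/(β sin(πτ/β)))^{2Δ}`:
the integral converges and equals
`iπ (sin πΔ)⁻¹ (2π/β)^{2Δ-1} Γ(Δ + βω/(2π)) / (Γ(2Δ) Γ(1 - Δ + βω/(2π)))`. -/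
theorem matsubara_conformal_fourier (β Δ : ℝ) (hβ : 0 < β)
    (hΔ : Δ ∈ Set.Ioo (0 : ℝ) (1 / 2)) (n : ℕ) (ω : ℝ)
    (hω : ω = (2 * π / β) * ((n : ℝ) + 1 / 2)) :
    IntervalIntegrable
        (fun τ : ℝ =>
          ((π / (β * Real.sin (π * τ / β))) ^ (2 * Δ) : ℝ) •
            Complex.exp (Complex.I * (ω : ℂ) * (τ : ℂ)))
        volume 0 β ∧
      ∫ τ in (0 : ℝ)..β,
          ((π / (β * Real.sin (π * τ / β))) ^ (2 * Δ) : ℝ) •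
            Complex.exp (Complex.I * (ω : ℂ) * (τ : ℂ)) =
        Complex.I * (π : ℂ) * ((Real.sin (π * Δ) : ℝ) : ℂ)⁻¹ *
            (((2 * π / β) ^ (2 * Δ - 1) : ℝ) : ℂ) *
            Complex.Gamma ((Δ : ℂ) + (β : ℂ) * (ω : ℂ) / (2 * (π : ℂ))) /
          (Complex.Gamma ((2 * Δ : ℝ) : ℂ) *
            Complex.Gamma (1 - (Δ : ℂ) + (β : ℂ) * (ω : ℂ) / (2 * (π : ℂ)))) := by
  have hpole (k : ℕ) : 2 * (Δ : ℂ) ≠ -k := by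
    exact_mod_cast (show 2 * Δ ≠ -(k : ℝ) by linarith [hΔ.1, k.cast_nonneg (α := ℝ)])
  obtain ⟨hint, hval⟩ := matsubara_conformal_fourier_general (Δ := Δ) hβ hΔ.2 hpole n
    (by exact_mod_cast hω)
  have hreal := eqOn_conformalTwoPoint_ofReal_mul_exp hβ Δ ω
  refine ⟨hint.congr_uIoo (hreal.mono Set.uIoo_subset_uIcc_self), ?_⟩
  rw [← intervalIntegral.integral_congr hreal, hval, Complex.ofReal_cpow (by positivity)]
  push_cast
  rfl
end

section
/- Let β > 0 and ν ∈ (0,1), and define g(τ) = 2 log( cos(πν/2) / cos(πν(1/2 − τ/β)) ) for τ ∈ (0, β). Then g satisfies the Liouville equation g''(τ) = (2π²ν²/(β² cos²(πν/2))) e^{g(τ)} on (0, β), and g(τ) → 0 both as τ → 0⁺ and as τ → β⁻. -/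
open Real Filter

/-!
Up to constants the profile is `-2 log cos θ` with phase `θ` affine in `τ`. Its derivative in `θ`
is `2 tan θ`, whose derivative `2 / cos² θ` is proportional to the exponential of the profile.
At `τ = 0` and `τ = β` the phase is `±πν/2`, where the two cosines in the ratio agree.
-/

/-- The trigonometric solution of the Liouville equation `g'' = (2k²/C²) e^g`, with amplitude `C`,
frequency `k` and phase `a`. As `Real.log` is `log |·|`, this is `log (C / cos (a - k x))²` whatever
the sign of the ratio. -/
noncomputable def liouvilleProfile (C k a x : ℝ) : ℝ :=
  2 * Real.log (C / Real.cos (a - k * x))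

section LiouvilleProfile

variable {C k a x : ℝ}

theorem exp_liouvilleProfile (hC : C ≠ 0) (hx : Real.cos (a - k * x) ≠ 0) :
    Real.exp (liouvilleProfile C k a x) = (C / Real.cos (a - k * x)) ^ 2 := by
  have hsq : 0 < (C / Real.cos (a - k * x)) ^ 2 := by positivity
  have hlog : liouvilleProfile C k a x = Real.log ((C / Real.cos (a - k * x)) ^ 2) := by
    simp [liouvilleProfile, Real.log_pow]
  rw [hlog, Real.exp_log hsq]

theorem liouvilleProfile_eq_zero_of_cos_eq (hC : C ≠ 0) (hx : Real.cos (a - k * x) = C) :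
    liouvilleProfile C k a x = 0 := by
  rw [liouvilleProfile, hx, div_self hC, Real.log_one, mul_zero]

theorem hasDerivAt_const_sub_const_mul : HasDerivAt (fun y ↦ a - k * y) (-k) x := by
  simpa using ((hasDerivAt_id x).const_mul k).const_sub a

theorem hasDerivAt_liouvilleProfile (hC : C ≠ 0) (hx : Real.cos (a - k * x) ≠ 0) :
    HasDerivAt (liouvilleProfile C k a) (-(2 * k) * Real.tan (a - k * x)) x := by
  have hratio := (hasDerivAt_const x C).fun_div hasDerivAt_const_sub_const_mul.cos hx
  refine ((hratio.log (div_ne_zero hC hx)).const_mul 2).congr_deriv ?_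
  rw [Real.tan_eq_sin_div_cos]
  field_simp
  ring

theorem hasDerivAt_deriv_liouvilleProfile (hC : C ≠ 0) (hx : Real.cos (a - k * x) ≠ 0) :
    HasDerivAt (deriv (liouvilleProfile C k a))
      (2 * k ^ 2 / C ^ 2 * Real.exp (liouvilleProfile C k a x)) x := by
  have hcont : ContinuousAt (fun y ↦ Real.cos (a - k * y)) x := by fun_prop
  have hderiv : deriv (liouvilleProfile C k a) =ᶠ[nhds x]
      fun y ↦ -(2 * k) * Real.tan (a - k * y) := by
    filter_upwards [hcont.eventually_ne hx] with y hy
    exact (hasDerivAt_liouvilleProfile hC hy).deriv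
  have htan := ((Real.hasDerivAt_tan hx).comp x hasDerivAt_const_sub_const_mul).const_mul (-(2 * k))
  refine (htan.congr_of_eventuallyEq hderiv).congr_deriv ?_
  rw [exp_liouvilleProfile hC hx]
  field_simp

theorem tendsto_liouvilleProfile_zero_of_cos_eq (hC : C ≠ 0) (hx : Real.cos (a - k * x) = C) :
    Tendsto (liouvilleProfile C k a) (nhds x) (nhds 0) := by
  have hcont := (hasDerivAt_liouvilleProfile hC (hx.trans_ne hC)).continuousAt
  simpa only [liouvilleProfile_eq_zero_of_cos_eq hC hx] using hcont.tendsto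

end LiouvilleProfile

theorem cos_pi_mul_div_two_pos {ν : ℝ} (hν : |ν| < 1) : 0 < Real.cos (π * ν / 2) := by
  obtain ⟨hlower, hupper⟩ := abs_lt.mp hν
  exact Real.cos_pos_of_mem_Ioo ⟨by nlinarith [Real.pi_pos], by nlinarith [Real.pi_pos]⟩

theorem abs_one_sub_two_mul_div_le_one {β τ : ℝ} (hτ : τ ∈ Set.Icc 0 β) :
    |1 - 2 * (τ / β)| ≤ 1 := by
  have hnonneg : 0 ≤ τ / β := div_nonneg hτ.1 (hτ.1.trans hτ.2)
  have hle_one : τ / β ≤ 1 := div_le_one_of_le₀ hτ.2 (hτ.1.trans hτ.2)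
  exact abs_le.mpr ⟨by linarith, by linarith⟩

theorem cos_pi_mul_half_sub_div_pos {β ν τ : ℝ} (hν : |ν| < 1) (hτ : τ ∈ Set.Icc 0 β) :
    0 < Real.cos (π * ν * (1 / 2 - τ / β)) := by
  have hscaled : |ν * (1 - 2 * (τ / β))| < 1 := by
    rw [abs_mul]
    exact mul_lt_one_of_nonneg_of_lt_one_left (abs_nonneg ν) hν (abs_one_sub_two_mul_div_le_one hτ)
  have hphase : π * ν * (1 / 2 - τ / β) = π * (ν * (1 - 2 * (τ / β))) / 2 := by ring
  rw [hphase]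
  exact cos_pi_mul_div_two_pos hscaled

theorem thermal_largeq_liouville_general (β ν : ℝ) (hβ : β ≠ 0) (hν : Real.cos (π * ν / 2) ≠ 0) :
    (∀ τ, Real.cos (π * ν * (1 / 2 - τ / β)) ≠ 0 →
        deriv (deriv (fun τ : ℝ =>
            2 * Real.log (Real.cos (π * ν / 2) / Real.cos (π * ν * (1 / 2 - τ / β))))) τ =
          (2 * π ^ 2 * ν ^ 2 / (β ^ 2 * (Real.cos (π * ν / 2)) ^ 2)) *
            Real.exp (2 * Real.log
              (Real.cos (π * ν / 2) / Real.cos (π * ν * (1 / 2 - τ / β))))) ∧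
    Tendsto (fun τ : ℝ =>
        2 * Real.log (Real.cos (π * ν / 2) / Real.cos (π * ν * (1 / 2 - τ / β))))
      (nhds 0) (nhds 0) ∧
    Tendsto (fun τ : ℝ =>
        2 * Real.log (Real.cos (π * ν / 2) / Real.cos (π * ν * (1 / 2 - τ / β))))
      (nhds β) (nhds 0) := by
  have hphase (τ : ℝ) : π * ν * (1 / 2 - τ / β) = π * ν / 2 - π * ν / β * τ := by ring
  have hphase_β : π * ν / 2 - π * ν / β * β = -(π * ν / 2) := by field_simp; ring
  simp only [hphase]
  refine ⟨fun τ hτ ↦ ?_, tendsto_liouvilleProfile_zero_of_cos_eq hν (by simp),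
    tendsto_liouvilleProfile_zero_of_cos_eq hν (by rw [hphase_β, Real.cos_neg])⟩
  refine (hasDerivAt_deriv_liouvilleProfile hν hτ).deriv.trans ?_
  rw [liouvilleProfile]
  congr 1
  field_simp

/-- The thermal large-`q` solution: `g(τ) = 2 log(cos(πν/2) / cos(πν(1/2 − τ/β)))`
satisfies the Liouville equation `g'' = (2π²ν²/(β² cos²(πν/2))) e^g` on `(0, β)`,
with boundary values `g → 0` as `τ → 0⁺` and as `τ → β⁻`. -/
theorem thermal_largeq_liouville (β ν : ℝ) (hβ : 0 < β) (hν : ν ∈ Set.Ioo (0 : ℝ) 1) :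
    (∀ τ ∈ Set.Ioo (0 : ℝ) β,
        deriv (deriv (fun τ : ℝ =>
            2 * Real.log (Real.cos (π * ν / 2) / Real.cos (π * ν * (1 / 2 - τ / β))))) τ =
          (2 * π ^ 2 * ν ^ 2 / (β ^ 2 * (Real.cos (π * ν / 2)) ^ 2)) *
            Real.exp (2 * Real.log
              (Real.cos (π * ν / 2) / Real.cos (π * ν * (1 / 2 - τ / β))))) ∧
    Tendsto (fun τ : ℝ =>
        2 * Real.log (Real.cos (π * ν / 2) / Real.cos (π * ν * (1 / 2 - τ / β))))
      (nhdsWithin 0 (Set.Ioi 0)) (nhds 0) ∧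
    Tendsto (fun τ : ℝ =>
        2 * Real.log (Real.cos (π * ν / 2) / Real.cos (π * ν * (1 / 2 - τ / β))))
      (nhdsWithin β (Set.Iio β)) (nhds 0) := by
  have hν_abs : |ν| < 1 := abs_lt.mpr ⟨by linarith [hν.1], hν.2⟩
  obtain ⟨hliouville, hzero, hbeta⟩ :=
    thermal_largeq_liouville_general β ν hβ.ne' (cos_pi_mul_div_two_pos hν_abs).ne'
  exact ⟨fun τ hτ ↦ hliouville τ
      (cos_pi_mul_half_sub_div_pos hν_abs (Set.Ioo_subset_Icc_self hτ)).ne',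
    hzero.mono_left nhdsWithin_le_nhds, hbeta.mono_left nhdsWithin_le_nhds⟩
end

section
/- Fix μ ∈ [0, 2] and define Φ_μ(ν) = (πν / cos(πν/2))² · (πν / sin(πν))^{μ/2 − 1} for ν ∈ (0,1). Then Φ_μ is strictly increasing on (0,1). -/
open Real

/-!
In the variable `x = πν`, the half-angle identity `(x / cos (x/2))² = 2 (1 - cos x) (x / sin x)²`
turns the closure function into `2 (1 - cos x) (x / sin x) ^ (μ/2 + 1)`. On `(0, π)` the first
factor is strictly increasing, and so is `x / sin x`, since `sin x / x` is a secant slope of the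
strictly concave sine; hence the product increases as soon as `-2 ≤ μ`.
-/

theorem strictAntiOn_sin_div_self : StrictAntiOn (fun x : ℝ => sin x / x) (Set.Ioc 0 π) := by
  intro x hx y hy hxy
  simpa using strictConcaveOn_sin_Icc.secant_strict_mono (Set.left_mem_Icc.2 pi_pos.le)
    (Set.Ioc_subset_Icc_self hx) (Set.Ioc_subset_Icc_self hy) hx.1.ne' hy.1.ne' hxy

theorem div_sin_pos {x : ℝ} (hx : x ∈ Set.Ioo 0 π) : 0 < x / sin x :=
  div_pos hx.1 (sin_pos_of_mem_Ioo hx)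

theorem strictMonoOn_div_sin : StrictMonoOn (fun x : ℝ => x / sin x) (Set.Ioo 0 π) := by
  intro x hx y hy hxy
  have sin_div_self_lt : sin y / y < sin x / x :=
    strictAntiOn_sin_div_self (Set.Ioo_subset_Ioc_self hx) (Set.Ioo_subset_Ioc_self hy) hxy
  simpa only [inv_div] using
    inv_strictAnti₀ (div_pos (sin_pos_of_mem_Ioo hy) hy.1) sin_div_self_lt

theorem div_cos_half_sq {x : ℝ} (hx : sin x ≠ 0) :
    (x / cos (x / 2)) ^ 2 = 2 * (1 - cos x) * (x / sin x) ^ 2 := by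
  have cos_half_sq : cos (x / 2) ^ 2 = (1 + cos x) / 2 := by
    rw [cos_sq, mul_div_cancel₀ x two_ne_zero]
    ring
  have sin_sq_factor : sin x ^ 2 = (1 - cos x) * (1 + cos x) := by
    rw [sin_sq]
    ring
  have factors_ne_zero : (1 - cos x) * (1 + cos x) ≠ 0 := sin_sq_factor ▸ pow_ne_zero 2 hx
  have one_sub_cos_ne_zero : 1 - cos x ≠ 0 := left_ne_zero_of_mul factors_ne_zero
  have one_add_cos_ne_zero : 1 + cos x ≠ 0 := right_ne_zero_of_mul factors_ne_zero
  rw [div_pow, div_pow, cos_half_sq, sin_sq_factor]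
  field_simp

theorem div_cos_half_sq_mul_rpow {x : ℝ} (hx : x ∈ Set.Ioo 0 π) (s : ℝ) :
    (x / cos (x / 2)) ^ 2 * (x / sin x) ^ s = 2 * (1 - cos x) * (x / sin x) ^ (s + 2) := by
  rw [div_cos_half_sq (sin_pos_of_mem_Ioo hx).ne', rpow_add (div_sin_pos hx), rpow_two]
  ring

theorem strictMonoOn_div_cos_half_sq_mul_rpow {s : ℝ} (hs : -2 ≤ s) :
    StrictMonoOn (fun x : ℝ => (x / cos (x / 2)) ^ 2 * (x / sin x) ^ s) (Set.Ioo 0 π) := by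
  intro x hx y hy hxy
  have cos_lt : cos y < cos x :=
    strictAntiOn_cos (Set.Ioo_subset_Icc_self hx) (Set.Ioo_subset_Icc_self hy) hxy
  have rpow_le : (x / sin x) ^ (s + 2) ≤ (y / sin y) ^ (s + 2) :=
    rpow_le_rpow (div_sin_pos hx).le (strictMonoOn_div_sin hx hy hxy).le (by linarith)
  simp only [div_cos_half_sq_mul_rpow hx, div_cos_half_sq_mul_rpow hy]
  exact mul_lt_mul (by linarith) rpow_le (rpow_pos_of_pos (div_sin_pos hx) _)
    (by linarith [cos_le_one y])

theorem closure_function_strictMono_general {μ : ℝ} (hμ : -2 ≤ μ) :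
    StrictMonoOn (fun ν : ℝ =>
        (π * ν / Real.cos (π * ν / 2)) ^ 2 *
          (π * ν / Real.sin (π * ν)) ^ (μ / 2 - 1))
      (Set.Ioo (0 : ℝ) 1) := by
  have mapsTo_pi_mul : Set.MapsTo (fun ν : ℝ => π * ν) (Set.Ioo 0 1) (Set.Ioo 0 π) :=
    fun ν hν => ⟨mul_pos pi_pos hν.1, mul_lt_of_lt_one_right pi_pos hν.2⟩
  have exponent_ge : -2 ≤ μ / 2 - 1 := by linarith
  exact (strictMonoOn_div_cos_half_sq_mul_rpow exponent_ge).comp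
    ((strictMono_mul_left_of_pos pi_pos).strictMonoOn _) mapsTo_pi_mul

/-- The large-`q` closure function `Φ_μ(ν) = (πν/cos(πν/2))² (πν/sin(πν))^{μ/2−1}`
is strictly increasing on `(0,1)` for every `μ ∈ [0,2]`. -/
theorem closure_function_strictMono (μ : ℝ) (hμ : μ ∈ Set.Icc (0 : ℝ) 2) :
    StrictMonoOn (fun ν : ℝ =>
        (π * ν / Real.cos (π * ν / 2)) ^ 2 *
          (π * ν / Real.sin (π * ν)) ^ (μ / 2 - 1))
      (Set.Ioo (0 : ℝ) 1) :=
  closure_function_strictMono_general (by linarith [hμ.1])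
end

section
/- Fix μ ∈ (0, 2], an integer q ≥ 1, J > 0 and β > 0, and define Φ_μ(ν) = (πν / cos(πν/2))² · (πν / sin(πν))^{μ/2 − 1} for ν ∈ (0,1). Then there exists a unique ν ∈ (0,1) satisfying the closure condition μ q (β² J² / 2^q)^{μ/2} = Φ_μ(ν). -/
open Real

/-!
Since `sin y = 2 sin (y / 2) cos (y / 2)`, putting `y = πν` gives
`Φ_μ(ν) = 2 (1 - cos y) / (sinc y) ^ (μ / 2 + 1)`. Clearing the denominator, the equation
`c = Φ_μ(ν)` becomes `2 (1 - cos y) = c (sinc y) ^ (μ / 2 + 1)`, whose two sides are continuous on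
the whole of `[0, π]`. For `c > 0` and `μ > -2`, the left side increases strictly from `0` to `4`
while the right side decreases from `c` to `0`, so they cross exactly once.
-/

open Set

theorem existsUnique_mem_Ioo_eq_of_strictMonoOn_of_antitoneOn {α δ : Type*}
    [ConditionallyCompleteLinearOrder α] [TopologicalSpace α] [OrderTopology α] [DenselyOrdered α]
    [LinearOrder δ] [TopologicalSpace δ] [OrderClosedTopology δ] {a b : α} {f g : α → δ}
    (hab : a ≤ b) (hf : StrictMonoOn f (Icc a b)) (hg : AntitoneOn g (Icc a b))
    (hfc : ContinuousOn f (Icc a b)) (hgc : ContinuousOn g (Icc a b))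
    (ha : f a < g a) (hb : g b < f b) :
    ∃! x, x ∈ Ioo a b ∧ f x = g x := by
  obtain ⟨x, hx, hfg⟩ := isPreconnected_Icc.intermediate_value₂ (left_mem_Icc.2 hab)
    (right_mem_Icc.2 hab) hfc hgc ha.le hb.le
  have hax : a ≠ x := by rintro rfl; exact ha.ne hfg
  have hxb : x ≠ b := by rintro rfl; exact hb.ne' hfg
  have not_lt_of_crossing : ∀ y ∈ Icc a b, ∀ z ∈ Icc a b, f y = g y → f z = g z → ¬ y < z :=
    fun y hy z hz hfgy hfgz hyz ↦
      (hf hy hz hyz).not_ge (hfgz.trans_le ((hg hy hz hyz.le).trans_eq hfgy.symm))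
  refine ⟨x, ⟨⟨hx.1.lt_of_ne hax, hx.2.lt_of_ne hxb⟩, hfg⟩, fun y ⟨hy, hfgy⟩ ↦ ?_⟩
  have hy' := Ioo_subset_Icc_self hy
  exact le_antisymm (le_of_not_gt (not_lt_of_crossing x hx y hy' hfg hfgy))
    (le_of_not_gt (not_lt_of_crossing y hy' x hx hfgy hfg))

theorem strictAntiOn_sinc : StrictAntiOn sinc (Icc 0 π) := by
  intro x hx y hy hxy
  have hy0 : 0 < y := hx.1.trans_lt hxy
  rw [sinc_of_ne_zero hy0.ne']
  rcases hx.1.eq_or_lt with rfl | hx0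
  · rw [sinc_zero, div_lt_one hy0]
    exact sin_lt hy0
  · rw [sinc_of_ne_zero hx0.ne']
    simpa only [sin_zero, sub_zero] using
      strictConcaveOn_sin_Icc.secant_strict_mono (left_mem_Icc.2 pi_nonneg) hx hy hx0.ne' hy0.ne'
        hxy

theorem sinc_pi : sinc π = 0 := by
  rw [sinc_of_ne_zero pi_ne_zero, sin_pi, zero_div]

theorem sinc_nonneg_of_mem_Icc {y : ℝ} (hy : y ∈ Icc 0 π) : 0 ≤ sinc y :=
  sinc_pi.symm.trans_le (strictAntiOn_sinc.antitoneOn hy (right_mem_Icc.2 pi_nonneg) hy.2)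

theorem sinc_pos_of_mem_Ico {y : ℝ} (hy : y ∈ Ico 0 π) : 0 < sinc y :=
  sinc_pi.symm.trans_lt
    (strictAntiOn_sinc (Ico_subset_Icc_self hy) (right_mem_Icc.2 pi_nonneg) hy.2)

theorem existsUnique_two_mul_one_sub_cos_eq_mul_sinc_rpow {c p : ℝ} (hc : 0 < c) (hp : 0 < p) :
    ∃! y, y ∈ Ioo 0 π ∧ 2 * (1 - cos y) = c * sinc y ^ p := by
  have lhs_strictMono : StrictMonoOn (fun y ↦ 2 * (1 - cos y)) (Icc 0 π) := fun x hx y hy hxy ↦ by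
    linarith [strictAntiOn_cos hx hy hxy]
  have rhs_antitone : AntitoneOn (fun y ↦ c * sinc y ^ p) (Icc 0 π) := fun x hx y hy hxy ↦
    mul_le_mul_of_nonneg_left
      (rpow_le_rpow (sinc_nonneg_of_mem_Icc hy) (strictAntiOn_sinc.antitoneOn hx hy hxy) hp.le)
      hc.le
  have rhs_continuous : Continuous (fun y ↦ c * sinc y ^ p) :=
    continuous_const.mul (continuous_sinc.rpow_const fun _ ↦ .inr hp.le)
  refine existsUnique_mem_Ioo_eq_of_strictMonoOn_of_antitoneOn pi_nonneg lhs_strictMono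
    rhs_antitone (by fun_prop) rhs_continuous.continuousOn ?_ ?_
  · simpa using hc
  · norm_num [sinc_pi, zero_rpow hp.ne']

theorem div_cos_half_sq_mul_div_sin_rpow {y : ℝ} (hy : y ∈ Ioo 0 π) (a : ℝ) :
    (y / cos (y / 2)) ^ 2 * (y / sin y) ^ a = 2 * (1 - cos y) / sinc y ^ (a + 2) := by
  have hy0 : 0 < y := hy.1
  have hsin : 0 < sin y := sin_pos_of_mem_Ioo hy
  have hcos : 0 < cos (y / 2) := cos_pos_of_mem_Ioo ⟨by linarith [pi_pos], by linarith [hy.2]⟩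
  have sin_eq : sin y = 2 * sin (y / 2) * cos (y / 2) := by rw [← sin_two_mul]; ring_nf
  have one_sub_cos : 2 * (1 - cos y) = (2 * sin (y / 2)) ^ 2 := by
    rw [mul_pow, sin_sq_eq_half_sub, mul_div_cancel₀ y two_ne_zero]
    ring
  have sq_eq : (y / cos (y / 2)) ^ 2 = 2 * (1 - cos y) * (y / sin y) ^ 2 := by
    rw [one_sub_cos, ← mul_pow, sin_eq]
    have : sin (y / 2) ≠ 0 := fun h ↦ hsin.ne' (by rw [sin_eq, h]; ring)
    field_simp
  calc (y / cos (y / 2)) ^ 2 * (y / sin y) ^ a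
      = 2 * (1 - cos y) * (y / sin y) ^ (a + 2) := by
        rw [sq_eq, rpow_add (by positivity), rpow_two]; ring
    _ = 2 * (1 - cos y) / sinc y ^ (a + 2) := by
        rw [sinc_of_ne_zero hy0.ne', ← inv_div y, inv_rpow (by positivity), div_inv_eq_mul]

/-- The function `Φ_μ` on the right-hand side of the closure condition, meaningful on `(0, 1)`. -/
noncomputable def closureFunction (μ ν : ℝ) : ℝ :=
  (π * ν / cos (π * ν / 2)) ^ 2 * (π * ν / sin (π * ν)) ^ (μ / 2 - 1)

theorem eq_closureFunction_iff {c μ ν : ℝ} (hν : π * ν ∈ Ioo 0 π) :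
    c = closureFunction μ ν ↔ 2 * (1 - cos (π * ν)) = c * sinc (π * ν) ^ (μ / 2 + 1) := by
  have hsinc : 0 < sinc (π * ν) := sinc_pos_of_mem_Ico (Ioo_subset_Ico_self hν)
  have exponent_eq : μ / 2 - 1 + 2 = μ / 2 + 1 := by ring
  rw [closureFunction, div_cos_half_sq_mul_div_sin_rpow hν, exponent_eq,
    eq_div_iff (rpow_pos_of_pos hsinc _).ne', eq_comm]

theorem closure_condition_existsUnique_general {c μ : ℝ} (hc : 0 < c) (hμ : -2 < μ) :
    ∃! ν, ν ∈ Ioo (0 : ℝ) 1 ∧ c = closureFunction μ ν := by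
  have mem_Ioo_iff (ν : ℝ) : ν ∈ Ioo (0 : ℝ) 1 ↔ π * ν ∈ Ioo 0 π := by
    simp only [mem_Ioo, mul_pos_iff_of_pos_left pi_pos, mul_lt_iff_lt_one_right pi_pos]
  refine ((Equiv.mulLeft₀ π pi_ne_zero).existsUnique_congr fun {ν} ↦ ?_).2
    (existsUnique_two_mul_one_sub_cos_eq_mul_sinc_rpow hc (show 0 < μ / 2 + 1 by linarith))
  rw [mem_Ioo_iff]
  exact and_congr_right eq_closureFunction_iff

/-- Existence and uniqueness of the solution `ν ∈ (0,1)` of the large-`q` closure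
condition `μ q (β² J² / 2^q)^{μ/2} = Φ_μ(ν)` of the Lévy SYK model. -/
theorem closure_condition_existsUnique (μ : ℝ) (hμ : μ ∈ Set.Ioc (0 : ℝ) 2)
    (q : ℕ) (hq : 1 ≤ q) (J β : ℝ) (hJ : 0 < J) (hβ : 0 < β) :
    ∃! ν : ℝ, ν ∈ Set.Ioo (0 : ℝ) 1 ∧
      μ * (q : ℝ) * (β ^ 2 * J ^ 2 / 2 ^ q) ^ (μ / 2) =
        (π * ν / Real.cos (π * ν / 2)) ^ 2 *
          (π * ν / Real.sin (π * ν)) ^ (μ / 2 - 1) := by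
  have hμ0 : 0 < μ := hμ.1
  exact closure_condition_existsUnique_general (by positivity) (by linarith)
end

section
/- Fix μ ∈ (0, 2], a real q > 0 and J > 0. Suppose ν : (0, ∞) → (0,1) is differentiable and satisfies the closure condition μ q (β² J² / 2^q)^{μ/2} = (πν(β)/cos(πν(β)/2))² · (πν(β)/sin(πν(β)))^{μ/2 − 1} for every β > 0. Define f(β) = (1/2) ln 2 + (μπν(β)/(2q²)) · (tan(πν(β)/2) − πν(β)/4). Then for every β > 0, writing ν = ν(β): f(β) − β f'(β) = (1/2) ln 2 − (μ/2)(πν/(2q))² − [π(2 − μ)μ ν (πν + sin(πν)) tan(πν/2)] / [2q² (πν(μ cos(πν) − 2) − (μ + 2) sin(πν))]. -/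
open Real

/-!
Write `x = πν`. The left side of the closure condition is a constant times `β ^ μ`, so taking
logarithmic derivatives turns the condition into `β x' · (log Φ)'(x) = μ`, where `Φ` is its right
side. As `(log Φ)'(x) = -D / (2 x sin x)`, with `D` the denominator of the entropy formula, this
gives `β x' = -2 μ x sin x / D`. The function `f` depends on `β` through `x` only, and by the chain
rule the entropy is `f - (β x') ∂f/∂x`, which the half-angle identity
`sin x * tan (x / 2) = 1 - cos x` brings to closed form.

That `D ≠ 0` needs no estimate: by the logarithmic derivative equation, `D = 0` would force `μ = 0`,
and the closure condition excludes this because its right side is positive.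
-/

open Filter Topology

lemma sin_mul_tan_half {x : ℝ} (hcos : cos (x / 2) ≠ 0) : sin x * tan (x / 2) = 1 - cos x := by
  have sin_eq : sin x = 2 * sin (x / 2) * cos (x / 2) := by
    rw [← sin_two_mul, mul_div_cancel₀ x two_ne_zero]
  have cos_eq : cos x = 1 - 2 * sin (x / 2) ^ 2 := by
    rw [← cos_two_mul_eq_one_sub, mul_div_cancel₀ x two_ne_zero]
  rw [sin_eq, cos_eq, tan_eq_sin_div_cos]
  field_simp
  ring

lemma logDeriv_rpow_const {f : ℝ → ℝ} {x : ℝ} (hf : DifferentiableAt ℝ f x) (hpos : 0 < f x)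
    (p : ℝ) : logDeriv (fun y => f y ^ p) x = p * logDeriv f x := by
  have hderiv := (hf.hasDerivAt.rpow_const (p := p) (.inl hpos.ne')).deriv
  have hrpow : f x ^ p ≠ 0 := (rpow_pos_of_pos hpos p).ne'
  rw [logDeriv_apply, logDeriv_apply, hderiv, rpow_sub_one hpos.ne']
  field_simp

lemma mul_logDeriv_const_mul_sq_mul_rpow {C K β : ℝ} (hC : C ≠ 0) (hK : 0 < β ^ 2 * K) (p : ℝ) :
    β * logDeriv (fun b => C * (b ^ 2 * K) ^ p) β = 2 * p := by
  have hβ : β ≠ 0 := by rintro rfl; simp at hK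
  have hK' : K ≠ 0 := right_ne_zero_of_mul hK.ne'
  rw [logDeriv_const_mul _ _ hC, logDeriv_rpow_const (f := fun b => b ^ 2 * K) (by fun_prop) hK,
    logDeriv_mul_const _ _ hK', logDeriv_pow]
  push_cast
  field_simp

lemma logDeriv_self_div_sin {x : ℝ} (hx : x ≠ 0) (hsin : sin x ≠ 0) :
    logDeriv (fun y => y / sin y) x = 1 / x - cos x / sin x := by
  rw [logDeriv_div (f := fun y => y) x hx hsin (by fun_prop) (by fun_prop), logDeriv_id',
    logDeriv_apply sin, Real.deriv_sin]

lemma logDeriv_self_div_cos_half {x : ℝ} (hx : x ≠ 0) (hcos : cos (x / 2) ≠ 0) :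
    logDeriv (fun y => y / cos (y / 2)) x = 1 / x + tan (x / 2) / 2 := by
  have hderiv := ((hasDerivAt_id' x).div_const 2).cos.deriv
  rw [logDeriv_div (f := fun y => y) x hx hcos (by fun_prop) (by fun_prop), logDeriv_id',
    logDeriv_apply (fun y => cos (y / 2)), hderiv, tan_eq_sin_div_cos]
  ring

namespace LevySYK

/-- The right side of the closure condition, as a function of `x = πν`. -/
noncomputable def closureFun (μ x : ℝ) : ℝ :=
  (x / cos (x / 2)) ^ 2 * (x / sin x) ^ (μ / 2 - 1)

/-- The denominator of the entropy formula without its factor `2 q²`, as a function of `x = πν`. -/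
noncomputable def entropyDenom (μ x : ℝ) : ℝ :=
  x * (μ * cos x - 2) - (μ + 2) * sin x

/-- The large-`q` value of `-βF/N`, as a function of `x = πν`. -/
noncomputable def logPartition (μ q x : ℝ) : ℝ :=
  1 / 2 * log 2 + μ * x / (2 * q ^ 2) * (tan (x / 2) - x / 4)

lemma cos_half_pos {x : ℝ} (hx : x ∈ Set.Ioo 0 π) : 0 < cos (x / 2) :=
  cos_pos_of_mem_Ioo ⟨by linarith [hx.1, pi_pos], by linarith [hx.2]⟩

lemma closureFun_pos (μ : ℝ) {x : ℝ} (hx : x ∈ Set.Ioo 0 π) : 0 < closureFun μ x := by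
  have hx0 : 0 < x := hx.1
  have hsin : 0 < sin x := sin_pos_of_mem_Ioo hx
  have hcos : 0 < cos (x / 2) := cos_half_pos hx
  unfold closureFun
  positivity

lemma differentiableAt_closureFun (μ : ℝ) {x : ℝ} (hx : x ∈ Set.Ioo 0 π) :
    DifferentiableAt ℝ (closureFun μ) x := by
  have hsin : sin x ≠ 0 := (sin_pos_of_mem_Ioo hx).ne'
  have hcos : cos (x / 2) ≠ 0 := (cos_half_pos hx).ne'
  have hquot : x / sin x ≠ 0 := div_ne_zero hx.1.ne' hsin
  unfold closureFun
  fun_prop (disch := assumption)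

lemma logDeriv_closureFun (μ : ℝ) {x : ℝ} (hx : x ∈ Set.Ioo 0 π) :
    logDeriv (closureFun μ) x = -entropyDenom μ x / (2 * x * sin x) := by
  have hx0 : x ≠ 0 := hx.1.ne'
  have hsin : sin x ≠ 0 := (sin_pos_of_mem_Ioo hx).ne'
  have hcos : cos (x / 2) ≠ 0 := (cos_half_pos hx).ne'
  have hquot : 0 < x / sin x := div_pos hx.1 (sin_pos_of_mem_Ioo hx)
  have hdsin : DifferentiableAt ℝ (fun y => y / sin y) x := by fun_prop (disch := assumption)
  have hdcos : DifferentiableAt ℝ (fun y => y / cos (y / 2)) x := by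
    fun_prop (disch := assumption)
  have expand : logDeriv (closureFun μ) x =
      2 * (1 / x + tan (x / 2) / 2) + (μ / 2 - 1) * (1 / x - cos x / sin x) := by
    calc
      _ = logDeriv (fun y => (y / cos (y / 2)) ^ 2) x +
          logDeriv (fun y => (y / sin y) ^ (μ / 2 - 1)) x :=
        logDeriv_mul x (by positivity) (rpow_pos_of_pos hquot _).ne' (hdcos.pow 2)
          (hdsin.rpow_const (.inl hquot.ne'))
      _ = _ := by
        rw [logDeriv_fun_pow hdcos, logDeriv_rpow_const hdsin hquot,
          logDeriv_self_div_cos_half hx0 hcos, logDeriv_self_div_sin hx0 hsin, Nat.cast_ofNat]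
  rw [expand, entropyDenom]
  field_simp
  linear_combination 2 * x * sin_mul_tan_half hcos

lemma hasDerivAt_logPartition (μ q : ℝ) {x : ℝ} (hcos : cos (x / 2) ≠ 0) :
    HasDerivAt (logPartition μ q)
      (μ / (2 * q ^ 2) * (tan (x / 2) * (1 + x / 2 * tan (x / 2)))) x := by
  have htan : HasDerivAt (fun y => tan (y / 2)) (1 / cos (x / 2) ^ 2 * (1 / 2)) x :=
    HasDerivAt.comp x (hasDerivAt_tan hcos) ((hasDerivAt_id' x).div_const 2)
  have hprod := (((hasDerivAt_id' x).const_mul μ).div_const (2 * q ^ 2)).mul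
    (htan.sub ((hasDerivAt_id' x).div_const 4))
  have sec_sq : 1 / cos (x / 2) ^ 2 = 1 + tan (x / 2) ^ 2 := by
    rw [one_div, ← inv_one_add_tan_sq hcos, inv_inv]
  refine (hprod.const_add (1 / 2 * log 2)).congr_deriv ?_
  simp only [Pi.sub_apply, sec_sq]
  ring

lemma mul_deriv_mul_entropyDenom {μ C K β : ℝ} {θ : ℝ → ℝ} (hC : C ≠ 0) (hK : 0 < β ^ 2 * K)
    (hθ : DifferentiableAt ℝ θ β) (hmem : θ β ∈ Set.Ioo 0 π)
    (hclosure : ∀ᶠ b in 𝓝 β, C * (b ^ 2 * K) ^ (μ / 2) = closureFun μ (θ b)) :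
    β * deriv θ β * entropyDenom μ (θ β) = -(2 * μ * θ β * sin (θ β)) := by
  have hθ0 : θ β ≠ 0 := hmem.1.ne'
  have hsin : sin (θ β) ≠ 0 := (sin_pos_of_mem_Ioo hmem).ne'
  have hlog : β * (-entropyDenom μ (θ β) / (2 * θ β * sin (θ β)) * deriv θ β) = μ := by
    calc
      _ = β * logDeriv (closureFun μ ∘ θ) β := by
        rw [logDeriv_comp (differentiableAt_closureFun μ hmem) hθ, logDeriv_closureFun μ hmem]
      _ = β * logDeriv (fun b => C * (b ^ 2 * K) ^ (μ / 2)) β := by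
        rw [(logDeriv_congr_nhds hclosure).eq_of_nhds, Function.comp_def]
      _ = 2 * (μ / 2) := mul_logDeriv_const_mul_sq_mul_rpow hC hK _
      _ = μ := by ring
  field_simp at hlog
  linear_combination -hlog

lemma entropyDenom_ne_zero {μ v x : ℝ} (hμ : μ ≠ 0) (hx : x ∈ Set.Ioo 0 π)
    (hv : v * entropyDenom μ x = -(2 * μ * x * sin x)) : entropyDenom μ x ≠ 0 := by
  have hx0 : x ≠ 0 := hx.1.ne'
  have hsin : sin x ≠ 0 := (sin_pos_of_mem_Ioo hx).ne'
  have hrhs : -(2 * μ * x * sin x) ≠ 0 := neg_ne_zero.mpr (by positivity)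
  exact right_ne_zero_of_mul (hv ▸ hrhs)

lemma logPartition_sub_mul_eq {μ x v : ℝ} (q : ℝ) (hcos : cos (x / 2) ≠ 0)
    (hdenom : entropyDenom μ x ≠ 0) (hv : v * entropyDenom μ x = -(2 * μ * x * sin x)) :
    logPartition μ q x - v * (μ / (2 * q ^ 2) * (tan (x / 2) * (1 + x / 2 * tan (x / 2)))) =
      1 / 2 * log 2 - μ / 2 * (x / (2 * q)) ^ 2 -
        (2 - μ) * μ * x * (x + sin x) * tan (x / 2) / (2 * q ^ 2 * entropyDenom μ x) := by
  have numerator : x * entropyDenom μ x + 2 * μ * x * sin x * (1 + x / 2 * tan (x / 2)) =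
      -((2 - μ) * x * (x + sin x)) := by
    rw [entropyDenom]
    linear_combination μ * x ^ 2 * sin_mul_tan_half hcos
  rw [← eq_div_iff hdenom] at hv
  have collect : x - v * (1 + x / 2 * tan (x / 2)) =
      -((2 - μ) * x * (x + sin x)) / entropyDenom μ x := by
    rw [hv, eq_div_iff hdenom, ← numerator]
    field_simp
    ring
  rw [logPartition, ← div_div]
  linear_combination μ / (2 * q ^ 2) * tan (x / 2) * collect

theorem logPartition_comp_sub_mul_deriv {μ C K β : ℝ} {θ : ℝ → ℝ} (q : ℝ) (hμ : μ ≠ 0)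
    (hC : C ≠ 0) (hK : 0 < β ^ 2 * K) (hθ : DifferentiableAt ℝ θ β) (hmem : θ β ∈ Set.Ioo 0 π)
    (hclosure : ∀ᶠ b in 𝓝 β, C * (b ^ 2 * K) ^ (μ / 2) = closureFun μ (θ b)) :
    logPartition μ q (θ β) - β * deriv (fun b => logPartition μ q (θ b)) β =
      1 / 2 * log 2 - μ / 2 * (θ β / (2 * q)) ^ 2 -
        (2 - μ) * μ * θ β * (θ β + sin (θ β)) * tan (θ β / 2) /
          (2 * q ^ 2 * entropyDenom μ (θ β)) := by
  have hcos : cos (θ β / 2) ≠ 0 := (cos_half_pos hmem).ne'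
  have hv := mul_deriv_mul_entropyDenom hC hK hθ hmem hclosure
  have hderiv := ((hasDerivAt_logPartition μ q hcos).comp β hθ.hasDerivAt).deriv
  rw [Function.comp_def] at hderiv
  rw [hderiv, ← logPartition_sub_mul_eq q hcos (entropyDenom_ne_zero hμ hmem hv) hv]
  ring

end LevySYK

open LevySYK

theorem largeq_entropy_formula_general (μ q J : ℝ) (ν : ℝ → ℝ) {β : ℝ}
    (hmem : ν β ∈ Set.Ioo (0 : ℝ) 1) (hdiff : DifferentiableAt ℝ ν β)
    (hclosure : ∀ᶠ b in 𝓝 β,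
      μ * q * (b ^ 2 * J ^ 2 / (2 : ℝ) ^ q) ^ (μ / 2) =
        (π * ν b / cos (π * ν b / 2)) ^ 2 * (π * ν b / sin (π * ν b)) ^ (μ / 2 - 1)) :
    (fun b : ℝ => (1 / 2) * log 2 +
        (μ * π * ν b / (2 * q ^ 2)) * (tan (π * ν b / 2) - π * ν b / 4)) β -
      β * deriv (fun b : ℝ => (1 / 2) * log 2 +
        (μ * π * ν b / (2 * q ^ 2)) * (tan (π * ν b / 2) - π * ν b / 4)) β =
    (1 / 2) * log 2 - (μ / 2) * (π * ν β / (2 * q)) ^ 2 -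
      (π * (2 - μ) * μ * ν β * (π * ν β + sin (π * ν β)) * tan (π * ν β / 2)) /
        (2 * q ^ 2 * (π * ν β * (μ * cos (π * ν β) - 2) - (μ + 2) * sin (π * ν β))) := by
  have hx : π * ν β ∈ Set.Ioo 0 π :=
    ⟨mul_pos pi_pos hmem.1, mul_lt_of_lt_one_right pi_pos hmem.2⟩
  have hne : μ * q * (β ^ 2 * J ^ 2 / (2 : ℝ) ^ q) ^ (μ / 2) ≠ 0 :=
    hclosure.self_of_nhds ▸ (closureFun_pos μ hx).ne'
  have hC : μ * q ≠ 0 := left_ne_zero_of_mul hne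
  have hμ : μ ≠ 0 := left_ne_zero_of_mul hC
  simp only [mul_div_assoc (_ ^ 2) (J ^ 2)] at hne hclosure
  have hK : 0 < β ^ 2 * (J ^ 2 / (2 : ℝ) ^ q) := by
    refine lt_of_le_of_ne (by positivity) fun h => right_ne_zero_of_mul hne ?_
    rw [← h, zero_rpow (div_ne_zero hμ two_ne_zero)]
  have h := logPartition_comp_sub_mul_deriv q hμ hC hK (hdiff.const_mul π) hx hclosure
  simp only [logPartition, entropyDenom, ← mul_assoc μ π] at h
  rw [h]
  ring

/-- Large-`q` entropy of the Lévy SYK model: with `f(β) = −βF/N` the large-`q` free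
energy expression, the entropy `f(β) − β f'(β)` has the stated closed form. -/
theorem largeq_entropy_formula (μ q J : ℝ) (hμ : μ ∈ Set.Ioc (0 : ℝ) 2)
    (hq : 0 < q) (hJ : 0 < J) (ν : ℝ → ℝ)
    (hmem : ∀ β > (0 : ℝ), ν β ∈ Set.Ioo (0 : ℝ) 1)
    (hdiff : ∀ β > (0 : ℝ), DifferentiableAt ℝ ν β)
    (hclosure : ∀ β > (0 : ℝ),
      μ * q * (β ^ 2 * J ^ 2 / (2 : ℝ) ^ q) ^ (μ / 2) =
        (π * ν β / Real.cos (π * ν β / 2)) ^ 2 *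
          (π * ν β / Real.sin (π * ν β)) ^ (μ / 2 - 1)) :
    ∀ β > (0 : ℝ),
      (fun b : ℝ => (1 / 2) * Real.log 2 +
          (μ * π * ν b / (2 * q ^ 2)) * (Real.tan (π * ν b / 2) - π * ν b / 4)) β -
        β * deriv (fun b : ℝ => (1 / 2) * Real.log 2 +
          (μ * π * ν b / (2 * q ^ 2)) * (Real.tan (π * ν b / 2) - π * ν b / 4)) β =
      (1 / 2) * Real.log 2 - (μ / 2) * (π * ν β / (2 * q)) ^ 2 -
        (π * (2 - μ) * μ * ν β * (π * ν β + Real.sin (π * ν β)) *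
            Real.tan (π * ν β / 2)) /
          (2 * q ^ 2 * (π * ν β * (μ * Real.cos (π * ν β) - 2) -
            (μ + 2) * Real.sin (π * ν β))) := by
  intro β hβ
  exact largeq_entropy_formula_general μ q J ν (hmem β hβ) (hdiff β hβ)
    (eventually_of_mem (Ioi_mem_nhds hβ) hclosure)
end

section
/- Fix μ ∈ (0, 2], a real q > 0, J > 0, β > 0 and ν ∈ (0,1), and suppose the closure condition μ q (β² J² / 2^q)^{μ/2} = (πν/cos(πν/2))² · (πν/sin(πν))^{μ/2 − 1} holds. Then (β² q μ J² cos²(πν/2) / (2^{q−1} π² ν²)) · (J² β² sin(πν) / (2^{q−2} πν))^{μ/2 − 1} = 2^{μ − 1}. -/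
open Real

/-!
Put `A = β² J² / 2 ^ q`, `S = πν / sin (πν)` and `C = πν / cos (πν / 2)`. The closure condition
reads `μ q A ^ (μ / 2) = C² S ^ (μ / 2 - 1)`, while the coupling is
`s₁ = (2 A μ q / C²) (4 A / S) ^ (μ / 2 - 1)`. The closure condition cancels all of `A`, `S` and
`C`, leaving `2 * 4 ^ (μ / 2 - 1) = 2 ^ (μ - 1)`.
-/

lemma cos_half_ne_zero_of_sin_ne_zero {x : ℝ} (hx : sin x ≠ 0) : cos (x / 2) ≠ 0 := by
  intro hcos
  apply hx
  rw [← mul_div_cancel₀ x (two_ne_zero' ℝ), sin_two_mul, hcos, mul_zero]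

lemma sin_pi_mul_pos {ν : ℝ} (hν : ν ∈ Set.Ioo (0 : ℝ) 1) : 0 < sin (π * ν) :=
  sin_pos_of_pos_of_lt_pi (mul_pos pi_pos hν.1) (mul_lt_of_lt_one_right pi_pos hν.2)

lemma two_mul_four_rpow_half_sub_one (μ : ℝ) :
    2 * (4 : ℝ) ^ (μ / 2 - 1) = 2 ^ (μ - 1) := by
  have four_eq : (4 : ℝ) = 2 ^ (2 : ℝ) := by norm_num
  calc 2 * (4 : ℝ) ^ (μ / 2 - 1) = 2 ^ (1 + 2 * (μ / 2 - 1)) := by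
        rw [four_eq, ← rpow_mul zero_le_two, rpow_add two_pos, rpow_one]
    _ = 2 ^ (μ - 1) := by ring_nf

lemma mul_mul_div_mul_rpow_eq_of_mul_rpow_add_one_eq {A S D K a c : ℝ} (b : ℝ) (hA : 0 < A)
    (hS : 0 < S) (hD : D ≠ 0) (hc : 0 ≤ c) (h : K * A ^ (a + 1) = D * S ^ a) :
    b * A * K / D * (c * A / S) ^ a = b * c ^ a := by
  have hSa : S ^ a ≠ 0 := (rpow_pos_of_pos hS a).ne'
  calc b * A * K / D * (c * A / S) ^ a
      = b * c ^ a * (K * A ^ (a + 1)) / (D * S ^ a) := by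
        rw [div_rpow (by positivity) hS.le, mul_rpow hc hA.le, rpow_add_one hA.ne']
        ring
    _ = b * c ^ a := by rw [h, mul_div_cancel_right₀ _ (mul_ne_zero hD hSa)]

lemma coupling_prefactor_eq (μ q J β ν c : ℝ) :
    β ^ 2 * q * μ * J ^ 2 * c ^ 2 / ((2 : ℝ) ^ (q - 1) * π ^ 2 * ν ^ 2) =
      2 * (β ^ 2 * J ^ 2 / 2 ^ q) * (μ * q) / (π * ν / c) ^ 2 := by
  rw [rpow_sub_one two_ne_zero]
  field_simp

lemma coupling_base_eq (q J β ν s : ℝ) :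
    J ^ 2 * β ^ 2 * s / ((2 : ℝ) ^ (q - 2) * π * ν) =
      4 * (β ^ 2 * J ^ 2 / 2 ^ q) / (π * ν / s) := by
  rw [rpow_sub two_pos, rpow_two]
  field_simp
  norm_num

theorem s1_equals_two_pow_general {μ q J β ν : ℝ} (hJ : J ≠ 0) (hβ : β ≠ 0)
    (hν : 0 < π * ν / sin (π * ν))
    (hclosure : μ * q * (β ^ 2 * J ^ 2 / (2 : ℝ) ^ q) ^ (μ / 2) =
      (π * ν / cos (π * ν / 2)) ^ 2 * (π * ν / sin (π * ν)) ^ (μ / 2 - 1)) :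
    (β ^ 2 * q * μ * J ^ 2 * cos (π * ν / 2) ^ 2 / ((2 : ℝ) ^ (q - 1) * π ^ 2 * ν ^ 2)) *
      (J ^ 2 * β ^ 2 * sin (π * ν) / ((2 : ℝ) ^ (q - 2) * π * ν)) ^ (μ / 2 - 1) =
    (2 : ℝ) ^ (μ - 1) := by
  obtain ⟨hπν, hsin⟩ := div_ne_zero_iff.mp hν.ne'
  have hcos : π * ν / cos (π * ν / 2) ≠ 0 :=
    div_ne_zero hπν (cos_half_ne_zero_of_sin_ne_zero hsin)
  rw [coupling_prefactor_eq, coupling_base_eq, ← two_mul_four_rpow_half_sub_one]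
  refine mul_mul_div_mul_rpow_eq_of_mul_rpow_add_one_eq 2 (by positivity) hν
    (pow_ne_zero 2 hcos) zero_le_four ?_
  rwa [sub_add_cancel]

/-- The Schrödinger coupling `s₁` of the Lévy SYK retarded-kernel problem equals
`2^{μ−1}` as a consequence of the large-`q` closure condition. -/
theorem s1_equals_two_pow (μ q J β ν : ℝ) (hμ : μ ∈ Set.Ioc (0 : ℝ) 2)
    (hq : 0 < q) (hJ : 0 < J) (hβ : 0 < β) (hν : ν ∈ Set.Ioo (0 : ℝ) 1)
    (hclosure :
      μ * q * (β ^ 2 * J ^ 2 / (2 : ℝ) ^ q) ^ (μ / 2) =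
        (π * ν / Real.cos (π * ν / 2)) ^ 2 *
          (π * ν / Real.sin (π * ν)) ^ (μ / 2 - 1)) :
    (β ^ 2 * q * μ * J ^ 2 * (Real.cos (π * ν / 2)) ^ 2 /
        ((2 : ℝ) ^ (q - 1) * π ^ 2 * ν ^ 2)) *
      (J ^ 2 * β ^ 2 * Real.sin (π * ν) / ((2 : ℝ) ^ (q - 2) * π * ν)) ^ (μ / 2 - 1) =
    (2 : ℝ) ^ (μ - 1) := by
  exact s1_equals_two_pow_general hJ.ne' hβ.ne'
    (div_pos (mul_pos pi_pos hν.1) (sin_pi_mul_pos hν)) hclosure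
end

section
/- Let μ ∈ (0, 2] and s₂ ≥ 0, set s₁ = 2^{μ−1} and ε(x) = (1 − √(1 + 4x))²/4, and define E_min = −ε(s₁)(1 − s₂) if s₂ < 1/2 and E_min = −ε(s₁)/(4s₂) if s₂ ≥ 1/2. Then 0 ≤ −E_min ≤ 1, with −E_min = 1 if and only if μ = 2 and s₂ = 0. Consequently, for any β > 0 and ν ∈ (0, 1], the exponent λ_L = (2πν/β)√(−E_min) satisfies λ_L ≤ 2πν/β ≤ 2π/β, with λ_L = 2πν/β if and only if μ = 2 and s₂ = 0. -/
open Real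

/-!
The energy factors as `-E_min = ε(s₁) κ(s₂)`, where `κ(s₂)` is the height of the profile
`sech² x (1 - s₂ sech² x)`. Both factors lie in `[0, 1]`, so their product is at most `1`, and it is
`1` only if both are. Now `ε(s₁) ≤ 1` means `√(1 + 4 s₁) ≤ 3`, i.e. `s₁ ≤ 2`, i.e. `μ ≤ 2`, with
equality throughout at `μ = 2`, while `κ(s₂) = 1` only for `s₂ = 0`.
-/

namespace LevySYK

/-- The binding energy `ε(s)` of the Pöschl–Teller operator `-∂² - s sech²`, `s > 0`: writing
`s = l (l + 1)` with `l > 0`, its ground-state energy is `-l²`. -/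
noncomputable def bindingEnergy (s : ℝ) : ℝ :=
  (1 - √(1 + 4 * s)) ^ 2 / 4

/-- The height `κ(s)` of the profile `sech² x (1 - s sech² x)`, i.e. the maximum of `y (1 - s y)`
over `y ∈ [0, 1]` for `s ≥ 0`: it is attained at `y = 1` for `s < 1/2` and at `y = 1 / (2 s)`
otherwise. -/
noncomputable def profileHeight (s : ℝ) : ℝ :=
  if s < 1 / 2 then 1 - s else 1 / (4 * s)

/-- The semi-analytic ground-state energy `E_min` of `-∂² - s₁ sech² (1 - s₂ sech²)`. -/
noncomputable def groundEnergy (s₁ s₂ : ℝ) : ℝ :=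
  if s₂ < 1 / 2 then -bindingEnergy s₁ * (1 - s₂) else -bindingEnergy s₁ / (4 * s₂)

theorem bindingEnergy_nonneg (s : ℝ) : 0 ≤ bindingEnergy s := by
  unfold bindingEnergy
  positivity

theorem bindingEnergy_le_one_iff {s : ℝ} : bindingEnergy s ≤ 1 ↔ s ≤ 2 := by
  have hr : 0 ≤ √(1 + 4 * s) := sqrt_nonneg _
  calc bindingEnergy s ≤ 1 ↔ √(1 + 4 * s) ≤ 3 := by
        unfold bindingEnergy
        constructor <;> intro h <;> nlinarith
    _ ↔ 1 + 4 * s ≤ 3 ^ 2 := sqrt_le_left (by norm_num)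
    _ ↔ s ≤ 2 := by constructor <;> intro h <;> linarith

theorem bindingEnergy_eq_one_iff {s : ℝ} : bindingEnergy s = 1 ↔ s = 2 := by
  have hr : 0 ≤ √(1 + 4 * s) := sqrt_nonneg _
  calc bindingEnergy s = 1 ↔ √(1 + 4 * s) = 3 := by
        unfold bindingEnergy
        constructor <;> intro h <;> nlinarith
    _ ↔ 1 + 4 * s = 3 ^ 2 := by
        rw [sqrt_eq_iff_mul_self_eq_of_pos (by norm_num), eq_comm, sq]
    _ ↔ s = 2 := by constructor <;> intro h <;> linarith

theorem profileHeight_pos (s : ℝ) : 0 < profileHeight s := by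
  unfold profileHeight
  split_ifs with hs
  · linarith
  · have : 0 < s := by linarith
    positivity

theorem profileHeight_le_one_iff {s : ℝ} : profileHeight s ≤ 1 ↔ 0 ≤ s := by
  unfold profileHeight
  split_ifs with hs
  · exact sub_le_self_iff 1
  · rw [div_le_one (by linarith)]
    constructor <;> intro _ <;> linarith

theorem profileHeight_eq_one_iff {s : ℝ} : profileHeight s = 1 ↔ s = 0 := by
  unfold profileHeight
  split_ifs with hs
  · exact sub_eq_self
  · rw [div_eq_one_iff_eq (by linarith)]
    constructor <;> intro _ <;> linarith

theorem neg_groundEnergy (s₁ s₂ : ℝ) :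
    -groundEnergy s₁ s₂ = bindingEnergy s₁ * profileHeight s₂ := by
  unfold groundEnergy profileHeight
  split_ifs <;> ring

theorem neg_groundEnergy_nonneg (s₁ s₂ : ℝ) : 0 ≤ -groundEnergy s₁ s₂ := by
  rw [neg_groundEnergy]
  exact mul_nonneg (bindingEnergy_nonneg s₁) (profileHeight_pos s₂).le

theorem neg_groundEnergy_le_one {s₁ s₂ : ℝ} (hs₁ : s₁ ≤ 2) (hs₂ : 0 ≤ s₂) :
    -groundEnergy s₁ s₂ ≤ 1 := by
  rw [neg_groundEnergy]
  exact mul_le_one₀ (bindingEnergy_le_one_iff.2 hs₁) (profileHeight_pos s₂).le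
    (profileHeight_le_one_iff.2 hs₂)

theorem neg_groundEnergy_eq_one_iff {s₁ s₂ : ℝ} (hs₁ : s₁ ≤ 2) (hs₂ : 0 ≤ s₂) :
    -groundEnergy s₁ s₂ = 1 ↔ s₁ = 2 ∧ s₂ = 0 :=
  calc -groundEnergy s₁ s₂ = 1
      ↔ bindingEnergy s₁ * profileHeight s₂ = 1 * 1 := by rw [neg_groundEnergy, one_mul]
    _ ↔ bindingEnergy s₁ = 1 ∧ profileHeight s₂ = 1 :=
        mul_eq_mul_iff_eq_and_eq_of_pos' (bindingEnergy_le_one_iff.2 hs₁)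
          (profileHeight_le_one_iff.2 hs₂) one_pos (profileHeight_pos s₂)
    _ ↔ s₁ = 2 ∧ s₂ = 0 := and_congr bindingEnergy_eq_one_iff profileHeight_eq_one_iff

theorem rpow_sub_one_le_self_iff {b x : ℝ} (hb : 1 < b) : b ^ (x - 1) ≤ b ↔ x ≤ 2 :=
  calc b ^ (x - 1) ≤ b ↔ b ^ (x - 1) ≤ b ^ (1 : ℝ) := by rw [rpow_one]
    _ ↔ x - 1 ≤ 1 := rpow_le_rpow_left_iff hb
    _ ↔ x ≤ 2 := by rw [sub_le_iff_le_add, one_add_one_eq_two]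

theorem rpow_sub_one_eq_self_iff {b x : ℝ} (hb₀ : 0 < b) (hb₁ : b ≠ 1) :
    b ^ (x - 1) = b ↔ x = 2 :=
  calc b ^ (x - 1) = b ↔ b ^ (x - 1) = b ^ (1 : ℝ) := by rw [rpow_one]
    _ ↔ x - 1 = 1 := rpow_right_inj hb₀ hb₁
    _ ↔ x = 2 := by rw [sub_eq_iff_eq_add, one_add_one_eq_two]

end LevySYK

open LevySYK

theorem lyapunov_bound_general {μ s₂ : ℝ} (hμ : μ ≤ 2) (hs₂ : 0 ≤ s₂) :
    (0 ≤ -groundEnergy (2 ^ (μ - 1)) s₂ ∧ -groundEnergy (2 ^ (μ - 1)) s₂ ≤ 1 ∧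
      (-groundEnergy (2 ^ (μ - 1)) s₂ = 1 ↔ μ = 2 ∧ s₂ = 0)) ∧
    ∀ β > (0 : ℝ), ∀ ν ∈ Set.Ioc (0 : ℝ) 1,
      (2 * π * ν / β) * √(-groundEnergy (2 ^ (μ - 1)) s₂) ≤ 2 * π * ν / β ∧
      2 * π * ν / β ≤ 2 * π / β ∧
      ((2 * π * ν / β) * √(-groundEnergy (2 ^ (μ - 1)) s₂) = 2 * π * ν / β ↔
        μ = 2 ∧ s₂ = 0) := by
  have hs₁ : (2 : ℝ) ^ (μ - 1) ≤ 2 := (rpow_sub_one_le_self_iff one_lt_two).2 hμ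
  have hE_le : -groundEnergy (2 ^ (μ - 1)) s₂ ≤ 1 := neg_groundEnergy_le_one hs₁ hs₂
  have hE_eq : -groundEnergy (2 ^ (μ - 1)) s₂ = 1 ↔ μ = 2 ∧ s₂ = 0 := by
    rw [neg_groundEnergy_eq_one_iff hs₁ hs₂, rpow_sub_one_eq_self_iff two_pos (by norm_num)]
  refine ⟨⟨neg_groundEnergy_nonneg _ _, hE_le, hE_eq⟩, fun β hβ ν ⟨hν_pos, hν_le⟩ => ?_⟩
  have hkrylov : 0 < 2 * π * ν / β := by positivity
  refine ⟨mul_le_of_le_one_right hkrylov.le (sqrt_le_one.2 hE_le), ?_, ?_⟩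
  · exact div_le_div_of_nonneg_right (mul_le_of_le_one_right two_pi_pos.le hν_le) hβ.le
  · rw [mul_eq_left₀ hkrylov.ne', sqrt_eq_one, hE_eq]

/-- Non-maximal chaos in the Lévy SYK model: with `s₁ = 2^{μ−1}`,
`ε(x) = (1 − √(1+4x))²/4` and `E_min` the semi-analytic ground-state energy,
one has `0 ≤ −E_min ≤ 1` with equality `−E_min = 1` iff `μ = 2` and `s₂ = 0`;
consequently `λ_L = (2πν/β)√(−E_min) ≤ 2πν/β ≤ 2π/β`, with
`λ_L = 2πν/β` iff `μ = 2` and `s₂ = 0`. -/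
theorem lyapunov_bound (μ s₂ s₁ Emin : ℝ) (hμ : μ ∈ Set.Ioc (0 : ℝ) 2)
    (hs₂ : 0 ≤ s₂) (hs₁ : s₁ = (2 : ℝ) ^ (μ - 1))
    (hE : Emin = if s₂ < 1 / 2 then
        -((1 - Real.sqrt (1 + 4 * s₁)) ^ 2 / 4) * (1 - s₂)
      else -((1 - Real.sqrt (1 + 4 * s₁)) ^ 2 / 4) / (4 * s₂)) :
    (0 ≤ -Emin ∧ -Emin ≤ 1 ∧ (-Emin = 1 ↔ μ = 2 ∧ s₂ = 0)) ∧
    ∀ β > (0 : ℝ), ∀ ν ∈ Set.Ioc (0 : ℝ) 1,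
      (2 * π * ν / β) * Real.sqrt (-Emin) ≤ 2 * π * ν / β ∧
      2 * π * ν / β ≤ 2 * π / β ∧
      ((2 * π * ν / β) * Real.sqrt (-Emin) = 2 * π * ν / β ↔ μ = 2 ∧ s₂ = 0) := by
  subst hs₁ hE
  exact lyapunov_bound_general hμ.2 hs₂
end
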